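/- arXiv:2301.05153 — 2 statements merged into one kernel-verified Lean document; each statement's English description precedes it below -/
import Mathlib

section
/- Suppose λ is an r-multipartition all of whose components are e-cores (a multicore), and suppose there exists a multicharge a' = (a'_1,…,a'_r) with a'_j ≡ a_j (mod e) for all j such that |ℓ^{a'}_{ij}(λ) − ℓ^{a'}_{ik}(λ)| ≤ 1 for every i ∈ {0,…,e−1} and all j,k ∈ {1,…,r}. Then |δ^j_i(λ) − δ^k_i(λ)| ≤ 2 for every i ∈ ℤ/eℤ and all j,k ∈ {1,…,r}. -/
/-!
Combinatorial framework for multipartitions, residues, β-sets, abacus levels,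
weights, hubs, core blocks and Scopes-type moves, following Fayers and the paper.
Rows and columns of Young diagrams are indexed from 0, so the node in row `b`
and column `c` (0-based) of component `j` has residue `a j + c - b` mod `e`.
-/

open scoped Classical

namespace AK

/-- A partition, given by its (antitone, finitely supported) sequence of parts,
rows indexed from `0`. -/
structure PartitionFun : Type where
  part : ℕ → ℕ
  antitone : Antitone part
  finite_support : ∃ N, ∀ b, N ≤ b → part b = 0

/-- The node in row `b`, column `c` (0-based) belongs to the Young diagram. -/
def PartitionFun.InDiag (lam : PartitionFun) (b c : ℕ) : Prop := c < lam.part b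

/-- The node `(b,c)` is removable: deleting it leaves the diagram of a partition. -/
def PartitionFun.Removable (lam : PartitionFun) (b c : ℕ) : Prop :=
  lam.part b = c + 1 ∧ lam.part (b + 1) ≤ c

/-- The node `(b,c)` is addable: adjoining it gives the diagram of a partition. -/
def PartitionFun.Addable (lam : PartitionFun) (b c : ℕ) : Prop :=
  lam.part b = c ∧ (b = 0 ∨ lam.part b < lam.part (b - 1))

/-- An `r`-multipartition. -/
abbrev Multipartition (r : ℕ) := Fin r → PartitionFun

/-- Nodes: `(b, c, j)` with row `b`, column `c`, component `j`. -/
abbrev Node (r : ℕ) := ℕ × ℕ × Fin r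

/-- The Young diagram of a multipartition, as a set of nodes. -/
def diag {r : ℕ} (lam : Multipartition r) : Set (Node r) :=
  {x | (lam x.2.2).InDiag x.1 x.2.1}

/-- The size `n` of a multipartition of `n`. -/
noncomputable def msize {r : ℕ} (lam : Multipartition r) : ℕ :=
  Set.ncard (diag lam)

/-- `c_i(λ)`: the number of nodes of residue `i` (mod `e`). -/
noncomputable def nodeCount {r : ℕ} (e : ℕ) (a : Fin r → ℤ) (lam : Multipartition r)
    (i : ℤ) : ℕ :=
  Set.ncard {x : Node r | (lam x.2.2).InDiag x.1 x.2.1 ∧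
    (a x.2.2 + (x.2.1 : ℤ) - (x.1 : ℤ)) % (e : ℤ) = i % e}

/-- Number of removable nodes of residue `i` in component `j`. -/
noncomputable def removableCount {r : ℕ} (e : ℕ) (a : Fin r → ℤ) (lam : Multipartition r)
    (i : ℤ) (j : Fin r) : ℕ :=
  Set.ncard {p : ℕ × ℕ | (lam j).Removable p.1 p.2 ∧
    (a j + (p.2 : ℤ) - (p.1 : ℤ)) % (e : ℤ) = i % e}

/-- Number of addable nodes of residue `i` in component `j`. -/
noncomputable def addableCount {r : ℕ} (e : ℕ) (a : Fin r → ℤ) (lam : Multipartition r)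
    (i : ℤ) (j : Fin r) : ℕ :=
  Set.ncard {p : ℕ × ℕ | (lam j).Addable p.1 p.2 ∧
    (a j + (p.2 : ℤ) - (p.1 : ℤ)) % (e : ℤ) = i % e}

/-- `δ^j_i(λ)` = (removable `i`-nodes of component `j`) − (addable `i`-nodes of component `j`). -/
noncomputable def delta {r : ℕ} (e : ℕ) (a : Fin r → ℤ) (lam : Multipartition r)
    (i : ℤ) (j : Fin r) : ℤ :=
  (removableCount e a lam i j : ℤ) - (addableCount e a lam i j : ℤ)

/-- The hub `δ_i(λ) = Σ_j δ^j_i(λ)`. -/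
noncomputable def hub {r : ℕ} (e : ℕ) (a : Fin r → ℤ) (lam : Multipartition r) (i : ℤ) : ℤ :=
  ∑ j : Fin r, delta e a lam i j

/-- Two multipartitions have the same hub. -/
def SameHub {r : ℕ} (e : ℕ) (a : Fin r → ℤ) (lam mu : Multipartition r) : Prop :=
  ∀ i : ℤ, hub e a lam i = hub e a mu i

/-- `d_i(m) = min { δ^j_i(m) : 1 ≤ j ≤ r }`. -/
noncomputable def dmin {r : ℕ} (e : ℕ) (a : Fin r → ℤ) (lam : Multipartition r) (i : ℤ) : ℤ :=
  sInf {x : ℤ | ∃ j : Fin r, delta e a lam i j = x}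

/-- The weight `w(λ) = Σ_j c_{a_j}(λ) − (1/2) Σ_{i∈ℤ/eℤ} (c_i(λ) − c_{i+1}(λ))²`. -/
noncomputable def weight {r : ℕ} (e : ℕ) (a : Fin r → ℤ) (lam : Multipartition r) : ℚ :=
  (∑ j : Fin r, (nodeCount e a lam (a j) : ℚ)) -
    (1 / 2 : ℚ) * ∑ i ∈ Finset.range e,
      ((nodeCount e a lam (i : ℤ) : ℚ) - (nodeCount e a lam ((i : ℤ) + 1) : ℚ)) ^ 2

/-- The β-set `B^j = {λ_b + a_j − b : b ≥ 1}` (here with rows indexed from 0). -/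
def betaSet (aj : ℤ) (lam : PartitionFun) : Set ℤ :=
  {x | ∃ b : ℕ, x = (lam.part b : ℤ) + aj - ((b : ℤ) + 1)}

/-- A partition is an `e`-core: `β ∈ B` implies `β − e ∈ B`. -/
def IsECore (e : ℕ) (aj : ℤ) (lam : PartitionFun) : Prop :=
  ∀ x ∈ betaSet aj lam, x - (e : ℤ) ∈ betaSet aj lam

/-- A multicore: all components are `e`-cores. -/
def IsMulticore {r : ℕ} (e : ℕ) (a : Fin r → ℤ) (lam : Multipartition r) : Prop :=
  ∀ j, IsECore e (a j) (lam j)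

/-- `ℓ^a_{ij}(λ)`: the level of the lowest bead on runner `i`, i.e. the largest `x`
with `x·e + i` in the β-set. -/
noncomputable def level (e : ℕ) (aj : ℤ) (lam : PartitionFun) (i : ℕ) : ℤ :=
  sSup {x : ℤ | x * (e : ℤ) + (i : ℤ) ∈ betaSet aj lam}

/-- `γ^{jk}_i(λ) = ℓ^a_{ij}(λ) − ℓ^a_{ik}(λ)`. -/
noncomputable def gamma {r : ℕ} (e : ℕ) (a : Fin r → ℤ) (lam : Multipartition r)
    (i : ℕ) (j k : Fin r) : ℤ :=
  level e (a j) (lam j) i - level e (a k) (lam k) i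

/-- `γ^{jk}_{il}(λ) = γ^{jk}_i(λ) − γ^{jk}_l(λ)`. -/
noncomputable def gammaD {r : ℕ} (e : ℕ) (a : Fin r → ℤ) (lam : Multipartition r)
    (i l : ℕ) (j k : Fin r) : ℤ :=
  gamma e a lam i j k - gamma e a lam l j k

/-- Move a bead from runner `i` to runner `l` in the β-set `S`: replace the largest
element of `S` congruent to `i` mod `e` by the smallest integer congruent to `l`
mod `e` not in `S`. -/
noncomputable def moveBead (e : ℕ) (i l : ℕ) (S : Set ℤ) : Set ℤ :=
  insert (sInf {x : ℤ | x % (e : ℤ) = (l : ℤ) % e ∧ x ∉ S})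
    (S \ {sSup {x : ℤ | x % (e : ℤ) = (i : ℤ) % e ∧ x ∈ S}})

/-- The effect of `s^{jk}_{il}` on the tuple of β-sets: move a bead from runner `i`
to runner `l` in component `j`, and from runner `l` to runner `i` in component `k`. -/
noncomputable def swapSets {r : ℕ} (e i l : ℕ) (j k : Fin r) (S : Fin r → Set ℤ) :
    Fin r → Set ℤ :=
  Function.update (Function.update S j (moveBead e i l (S j))) k
    (moveBead e l i (Function.update S j (moveBead e i l (S j)) k))

/-- `m' = s^{jk}_{il}(m)`, expressed via β-sets. -/
def IsSwap {r : ℕ} (e : ℕ) (a : Fin r → ℤ) (i l : ℕ) (j k : Fin r)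
    (m m' : Multipartition r) : Prop :=
  ∀ j', betaSet (a j') (m' j') = swapSets e i l j k (fun t => betaSet (a t) (m t)) j'

/-- `λ` lies in a core block: its weight is minimal among the weights of all
multipartitions with the same hub. -/
def MinimalWeight {r : ℕ} (e : ℕ) (a : Fin r → ℤ) (lam : Multipartition r) : Prop :=
  ∀ mu : Multipartition r, SameHub e a lam mu → weight e a lam ≤ weight e a mu

/-- `(b_0,…,b_{e−1})` is a base tuple for `mu` with respect to the multicharge `a'`
(congruent to `a` componentwise mod `e`): each `ℓ^{a'}_{ij}(mu)` is `b i` or `b i + 1`. -/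
def IsBaseTuple {r : ℕ} (e : ℕ) (a : Fin r → ℤ) (mu : Multipartition r)
    (a' : Fin r → ℤ) (b : ℕ → ℤ) : Prop :=
  (∀ j, (e : ℤ) ∣ (a' j - a j)) ∧
    ∀ i < e, ∀ j, level e (a' j) (mu j) i = b i ∨ level e (a' j) (mu j) i = b i + 1

/-- `K_i(C)` for the core block of `mu`: among all base tuples (over all admissible
multicharges), take `b i` maximal and then `b (i−1)` minimal, and set
`K_i = b_i − b_{i−1} − 1` for `i ≠ 0`, `K_0 = b_0 − b_{e−1} − 2`. -/
noncomputable def Kconst {r : ℕ} (e : ℕ) (a : Fin r → ℤ) (mu : Multipartition r)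
    (i : ℕ) : ℤ :=
  let Bi : ℤ := sSup {x : ℤ | ∃ a' bt, IsBaseTuple e a mu a' bt ∧ bt i = x}
  let iprev : ℕ := if i = 0 then e - 1 else i - 1
  let Bp : ℤ := sInf {x : ℤ | ∃ a' bt, IsBaseTuple e a mu a' bt ∧ bt i = Bi ∧ bt iprev = x}
  Bi - Bp - (if i = 0 then 2 else 1)

/-- The map `φ_i : ℤ → ℤ`. -/
def phiMap (e i : ℕ) (x : ℤ) : ℤ :=
  if x % (e : ℤ) = ((i : ℤ) - 1) % e then x + 1
  else if x % (e : ℤ) = (i : ℤ) % e then x - 1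
  else x

/-- Lexicographic order on multipartitions: `λ > μ`. -/
def lexGT {r : ℕ} (lam mu : Multipartition r) : Prop :=
  ∃ j : Fin r, (∀ j' < j, (lam j').part = (mu j').part) ∧
    ∃ i : ℕ, (∀ i' < i, (lam j).part i' = (mu j).part i') ∧
      (mu j).part i < (lam j).part i

/-- `x` is above `y`: `j < j'` or (`j = j'` and `b < b'`). -/
def NodeAbove {r : ℕ} (x y : Node r) : Prop :=
  x.2.2 < y.2.2 ∨ (x.2.2 = y.2.2 ∧ x.1 < y.1)

/-- The order on nodes: `x < y` iff `y` is above `x`. -/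
def NodeLT {r : ℕ} (x y : Node r) : Prop := NodeAbove y x

/-- `N_A(λ)` = (addable `i`-nodes of `λ` below `A`) − (removable `i`-nodes of `λ` below `A`). -/
noncomputable def Nfac {r : ℕ} (e : ℕ) (a : Fin r → ℤ) (lam : Multipartition r)
    (i : ℤ) (A : Node r) : ℤ :=
  (Set.ncard {y : Node r | (lam y.2.2).Addable y.1 y.2.1 ∧
      (a y.2.2 + (y.2.1 : ℤ) - (y.1 : ℤ)) % (e : ℤ) = i % e ∧ NodeAbove A y} : ℤ) -
  (Set.ncard {y : Node r | (lam y.2.2).Removable y.1 y.2.1 ∧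
      (a y.2.2 + (y.2.1 : ℤ) - (y.1 : ℤ)) % (e : ℤ) = i % e ∧ NodeAbove A y} : ℤ)

/-- `lam` is obtained from `mu` by adding one `e`-rim hook to some component:
on β-sets, some `β ∈ B^j` with `β + e ∉ B^j` is replaced by `β + e`. -/
def AddRimHook {r : ℕ} (e : ℕ) (a : Fin r → ℤ) (mu lam : Multipartition r) : Prop :=
  ∃ (j : Fin r) (β : ℤ), β ∈ betaSet (a j) (mu j) ∧ β + (e : ℤ) ∉ betaSet (a j) (mu j) ∧
    betaSet (a j) (lam j) = insert (β + (e : ℤ)) (betaSet (a j) (mu j) \ {β}) ∧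
    ∀ j' ≠ j, betaSet (a j') (lam j') = betaSet (a j') (mu j')

/-- The number of inversions (length) of a permutation of `Fin d`. -/
noncomputable def permLength (d : ℕ) (σ : Equiv.Perm (Fin d)) : ℕ :=
  (Finset.univ.filter (fun p : Fin d × Fin d => p.1 < p.2 ∧ σ p.2 < σ p.1)).card


lemma part_sub_lt (l : PartitionFun) {b b' : ℕ} (h : b < b') :
    (l.part b' : ℤ) - b' < (l.part b : ℤ) - b := by
  have := l.antitone h.le
  omega

lemma part_sub_inj (l : PartitionFun) {b b' : ℕ}
    (h : (l.part b' : ℤ) - b' = (l.part b : ℤ) - b) : b = b' := by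
  rcases lt_trichotomy b b' with h1 | h1 | h1
  · have := part_sub_lt l h1; omega
  · exact h1
  · have := part_sub_lt l h1; omega

lemma ediv_cancel {e v i : ℤ} (h : v % e = i % e) :
    (v - i) / e * e + i = v := by
  have : e ∣ v - i := Int.ModEq.dvd (show i % e = v % e from h.symm)
  have := Int.ediv_mul_cancel this
  omega

lemma removable_ncard (e : ℕ) (he : 2 ≤ e) (t : ℤ) (l : PartitionFun) (i : ℤ) :
    Set.ncard {p : ℕ × ℕ | l.Removable p.1 p.2 ∧ (t + (p.2 : ℤ) - (p.1 : ℤ)) % (e : ℤ) = i % e}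
    = Set.ncard {x : ℤ | x * e + i ∈ betaSet t l ∧ x * e + (i - 1) ∉ betaSet t l} := by
  refine Set.ncard_congr (fun p _ => (t + (p.2 : ℤ) - (p.1 : ℤ) - i) / e) ?_ ?_ ?_
  · rintro ⟨b, c⟩ ⟨⟨h1, h2⟩, h3⟩
    simp only at h1 h2 h3
    have := ediv_cancel h3
    simp only [Set.mem_setOf_eq]
    refine ⟨⟨b, by rw [this]; push_cast [h1]; ring⟩, ?_⟩
    rintro ⟨b', hb'⟩
    rcases lt_trichotomy b b' with h | h | h
    · have hh := l.antitone (show b + 1 ≤ b' from h)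
      omega
    · subst h; omega
    · have hh := part_sub_lt l h
      omega
  · rintro ⟨b, c⟩ ⟨b', c'⟩ ⟨⟨h1, h2⟩, h3⟩ ⟨⟨h1', h2'⟩, h3'⟩ h
    simp only at h1 h2 h3 h1' h2' h3' h
    have e1 := ediv_cancel h3
    have e2 := ediv_cancel h3'
    rw [h] at e1
    have : b = b' := part_sub_inj l (by omega)
    subst this
    ext <;> simp; omega
  · rintro x ⟨⟨b, hb⟩, hx⟩
    have hpos : l.part (b + 1) < l.part b := by
      by_contra hc
      have := l.antitone (Nat.le_succ b)
      exact hx ⟨b + 1, by push_cast; simp only [Nat.succ_eq_add_one] at this; omega⟩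
    have hv : t + ((l.part b - 1 : ℕ) : ℤ) - (b : ℤ) = x * e + i := by omega
    refine ⟨(b, l.part b - 1), ⟨⟨by simp only; omega, by simp only; omega⟩, ?_⟩, ?_⟩
    · simp only [hv]; simp
    · simp only [hv]
      rw [add_sub_cancel_right, Int.mul_ediv_cancel _ (by omega)]

lemma addable_ncard (e : ℕ) (he : 2 ≤ e) (t : ℤ) (l : PartitionFun) (i : ℤ) :
    Set.ncard {p : ℕ × ℕ | l.Addable p.1 p.2 ∧ (t + (p.2 : ℤ) - (p.1 : ℤ)) % (e : ℤ) = i % e}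
    = Set.ncard {x : ℤ | x * e + (i - 1) ∈ betaSet t l ∧ x * e + i ∉ betaSet t l} := by
  refine Set.ncard_congr (fun p _ => (t + (p.2 : ℤ) - (p.1 : ℤ) - i) / e) ?_ ?_ ?_
  · rintro ⟨b, c⟩ ⟨⟨h1, h2⟩, h3⟩
    simp only at h1 h2 h3
    have := ediv_cancel h3
    simp only [Set.mem_setOf_eq]
    refine ⟨⟨b, by omega⟩, ?_⟩
    rintro ⟨b', hb'⟩
    rcases lt_trichotomy b b' with h | h | h
    · have hh := part_sub_lt l h
      omega
    · subst h; omega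
    · have hh := l.antitone (show b' ≤ b - 1 by omega)
      omega
  · rintro ⟨b, c⟩ ⟨b', c'⟩ ⟨⟨h1, h2⟩, h3⟩ ⟨⟨h1', h2'⟩, h3'⟩ h
    simp only at h1 h2 h3 h1' h2' h3' h
    have e1 := ediv_cancel h3
    have e2 := ediv_cancel h3'
    rw [h] at e1
    have : b = b' := part_sub_inj l (by omega)
    subst this
    ext <;> simp; omega
  · rintro x ⟨⟨b, hb⟩, hx⟩
    have hpos : b = 0 ∨ l.part b < l.part (b - 1) := by
      by_contra hc
      have := l.antitone (Nat.sub_le b 1)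
      exact hx ⟨b - 1, by omega⟩
    have hv : t + (l.part b : ℤ) - (b : ℤ) = x * e + i := by omega
    refine ⟨(b, l.part b), ⟨⟨rfl, hpos⟩, ?_⟩, ?_⟩
    · simp only [hv]; simp
    · simp only [hv]
      rw [add_sub_cancel_right, Int.mul_ediv_cancel _ (by omega)]

lemma exists_L (e : ℕ) (he : 2 ≤ e) (t : ℤ) (l : PartitionFun) (hc : IsECore e t l) (p : ℤ) :
    ∃ L : ℤ, ∀ x : ℤ, x * e + p ∈ betaSet t l ↔ x ≤ L := by
  have hbdd : ∀ y ∈ betaSet t l, y < l.part 0 + t := by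
    rintro y ⟨b, rfl⟩
    have := l.antitone (Nat.zero_le b)
    omega
  have hbdd' : ∃ b : ℤ, ∀ x : ℤ, x * e + p ∈ betaSet t l → x ≤ b := by
    refine ⟨max 0 (l.part 0 + t - p), fun x hx => ?_⟩
    have := hbdd _ hx
    by_cases h0 : x ≤ 0
    · exact h0.trans (le_max_left _ _)
    · refine le_trans ?_ (le_max_right _ _)
      have : (2 : ℤ) ≤ e := by exact_mod_cast he
      nlinarith
  obtain ⟨N, hN⟩ := l.finite_support
  have hlow : ∀ y : ℤ, y < t - N → y ∈ betaSet t l := by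
    intro y hy
    refine ⟨(t - y - 1).toNat, ?_⟩
    rw [hN _ (by omega)]
    push_cast
    omega
  have hne : ∃ x : ℤ, x * e + p ∈ betaSet t l := by
    refine ⟨min (-1) (t - N - p - 1), hlow _ ?_⟩
    have h2 : (2 : ℤ) ≤ e := by exact_mod_cast he
    have h1 := min_le_left (-1 : ℤ) (t - N - p - 1)
    have h3 := min_le_right (-1 : ℤ) (t - N - p - 1)
    nlinarith
  obtain ⟨L, hL, hmax⟩ := Int.exists_greatest_of_bdd hbdd' hne
  refine ⟨L, fun x => ⟨hmax x, fun hx => ?_⟩⟩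
  obtain ⟨n, hn⟩ := Int.le.dest hx
  have key : ∀ n : ℕ, (L - n) * e + p ∈ betaSet t l := by
    intro n
    induction n with
    | zero => simpa using hL
    | succ k ih =>
      have := hc _ ih
      convert this using 1
      push_cast; ring
  have := key n
  rwa [show L - (n : ℤ) = x by omega] at this

lemma level_eq (e : ℕ) (t : ℤ) (l : PartitionFun) (i : ℕ) (L : ℤ)
    (h : ∀ x : ℤ, x * e + (i : ℤ) ∈ betaSet t l ↔ x ≤ L) : level e t l i = L := by
  have : {x : ℤ | x * (e : ℤ) + (i : ℤ) ∈ betaSet t l} = Set.Iic L := by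
    ext x; exact h x
  rw [level, this, csSup_Iic]

lemma delta_eq (e : ℕ) (he : 2 ≤ e) (t : ℤ) (l : PartitionFun) (hc : IsECore e t l) (i : ℕ)
    (hi : i < e) :
    (Set.ncard {p : ℕ × ℕ | l.Removable p.1 p.2 ∧
        (t + (p.2 : ℤ) - (p.1 : ℤ)) % (e : ℤ) = (i : ℤ) % e} : ℤ)
    - (Set.ncard {p : ℕ × ℕ | l.Addable p.1 p.2 ∧
        (t + (p.2 : ℤ) - (p.1 : ℤ)) % (e : ℤ) = (i : ℤ) % e} : ℤ)
    = level e t l i - level e t l (if i = 0 then e - 1 else i - 1) - (if i = 0 then 1 else 0) := by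
  obtain ⟨L, hL⟩ := exists_L e he t l hc i
  obtain ⟨M, hM⟩ := exists_L e he t l hc ((i : ℤ) - 1)
  have h1 : {x : ℤ | x * e + (i : ℤ) ∈ betaSet t l ∧ x * e + ((i : ℤ) - 1) ∉ betaSet t l}
      = (Finset.Ioc M L : Set ℤ) := by
    ext x
    simp only [Set.mem_setOf_eq, hL, hM, Finset.coe_Ioc, Set.mem_Ioc]
    omega
  have h2 : {x : ℤ | x * e + ((i : ℤ) - 1) ∈ betaSet t l ∧ x * e + (i : ℤ) ∉ betaSet t l}
      = (Finset.Ioc L M : Set ℤ) := by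
    ext x
    simp only [Set.mem_setOf_eq, hL, hM, Finset.coe_Ioc, Set.mem_Ioc]
    omega
  rw [removable_ncard e he, addable_ncard e he, h1, h2, Set.ncard_coe_finset,
    Set.ncard_coe_finset, Int.card_Ioc, Int.card_Ioc, level_eq e t l i L hL]
  split_ifs with h0
  · rw [level_eq e t l (e - 1) (M - 1)]
    · omega
    · intro x
      have := hM (x + 1)
      rw [show (x + 1) * (e : ℤ) + ((i : ℤ) - 1) = x * e + ((e - 1 : ℕ) : ℤ) by
        subst h0; push_cast [show 1 ≤ e by omega]; ring] at this
      rw [this]; omega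
  · rw [level_eq e t l (i - 1) M]
    · omega
    · intro x
      rw [← hM x]; push_cast [show 1 ≤ i by omega]; rfl

lemma core_shift (e : ℕ) (s t : ℤ) (l : PartitionFun) (hc : IsECore e s l) : IsECore e t l := by
  rintro x ⟨b, hb⟩
  obtain ⟨b', hb'⟩ := hc (x + s - t) ⟨b, by omega⟩
  exact ⟨b', by omega⟩

/-- Corollary 3.10: if a multicore `λ` admits a multicharge congruent
to `a` mod `e` for which all level differences are at most 1, then
`|δ^j_i(λ) − δ^k_i(λ)| ≤ 2` for all residues `i` and components `j, k`. -/
theorem stmt_0 {e r : ℕ} (he : 2 ≤ e) (hr : 0 < r) (a : Fin r → ℤ)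
    (lam : Multipartition r) (hcore : IsMulticore e a lam)
    (hcb : ∃ a' : Fin r → ℤ, (∀ j, (e : ℤ) ∣ (a' j - a j)) ∧
      ∀ i < e, ∀ j k : Fin r,
        |level e (a' j) (lam j) i - level e (a' k) (lam k) i| ≤ 1) :
    ∀ (i : ℤ) (j k : Fin r), |delta e a lam i j - delta e a lam i k| ≤ 2 := by
  obtain ⟨a', ha, hl⟩ := hcb
  intro i j k
  obtain ⟨n, hn⟩ : ∃ n : ℕ, (n : ℤ) = i % e :=
    ⟨(i % e).toNat, Int.toNat_of_nonneg (Int.emod_nonneg _ (by omega))⟩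
  have hne : n < e := by
    have := Int.emod_lt_of_pos i (show (0 : ℤ) < e by omega)
    omega
  have key : ∀ j, delta e a lam i j = level e (a' j) (lam j) n
      - level e (a' j) (lam j) (if n = 0 then e - 1 else n - 1) - (if n = 0 then 1 else 0) := by
    intro j
    rw [← delta_eq e he (a' j) (lam j) (core_shift e (a j) _ _ (hcore j)) n hne]
    have hm : ∀ c b : ℕ, (a j + (c : ℤ) - (b : ℤ)) % (e : ℤ) = (a' j + (c : ℤ) - (b : ℤ)) % e := by
      intro c b
      apply Int.emod_emod_of_dvd _ (dvd_refl (e : ℤ)) |>.symm.trans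
      rw [Int.emod_emod_of_dvd _ (dvd_refl (e : ℤ))]
      apply (Int.modEq_iff_dvd.2 _ : _ ≡ _ [ZMOD e])
      have := ha j
      rwa [show a' j + (c : ℤ) - b - (a j + c - b) = a' j - a j by ring]
    have hi : (n : ℤ) % e = i % e := by rw [hn]; simp
    simp only [delta, removableCount, addableCount, hm, hi]
  rw [key, key]
  have h1 := abs_le.1 (hl n hne j k)
  have h2 := abs_le.1 (hl (if n = 0 then e - 1 else n - 1) (by split_ifs <;> omega) j k)
  rw [abs_le]
  constructor <;> linarith [h1.1, h1.2, h2.1, h2.2]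

end AK
end

section
/- If m is a multicore, then there is a sequence m = m_0, m_1, …, m_u of multicores such that, for every t = 0,…,u−1, m_{t+1} = s^{jk}_{il}(m_t) for some i,l ∈ {0,…,e−1} and j,k ∈ {1,…,r}, the weights satisfy w(m_{t+1}) ≤ w(m_t) for all t, and m_u lies in the core block of m (that is, m_u has the same hub as m and its weight is minimal among the weights of all multipartitions with that hub). -/
/-!
Combinatorial framework for multipartitions, residues, β-sets, abacus levels,
weights, hubs, core blocks and Scopes-type moves, following Fayers and the paper.
Rows and columns of Young diagrams are indexed from 0, so the node in row `b`
and column `c` (0-based) of component `j` has residue `a j + c - b` mod `e`.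
-/

open scoped Classical

namespace AK

set_option linter.unusedSectionVars false
section Mat
variable {ι κ : Type} [Fintype ι] [Fintype κ]

def ip (x y : ι → κ → ℤ) : ℤ := ∑ i, ∑ j, x i j * y i j

noncomputable def swp (i l : ι) (j k : κ) : ι → κ → ℤ := fun i' j' =>
  ((if i' = i then 1 else 0) - (if i' = l then 1 else 0)) *
  ((if j' = j then 1 else 0) - (if j' = k then 1 else 0))

lemma ip_swp (z : ι → κ → ℤ) (i l : ι) (j k : κ) :
    ip z (swp i l j k) = z i j - z i k - z l j + z l k := by
  have h : ∀ i', ∑ j', z i' j' * swp i l j k i' j' =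
      (z i' j - z i' k) * ((if i' = i then 1 else 0) - (if i' = l then 1 else 0)) := by
    intro i'
    have : ∀ j', z i' j' * swp i l j k i' j' =
      ((if j' = j then z i' j' else 0) - (if j' = k then z i' j' else 0)) *
       ((if i' = i then 1 else 0) - (if i' = l then 1 else 0)) := by
      intro j'; unfold swp; split_ifs <;> ring
    simp only [this]
    rw [← Finset.sum_mul, Finset.sum_sub_distrib]
    simp
  unfold ip
  simp only [h]
  simp only [mul_sub, Finset.sum_sub_distrib, mul_ite, mul_one, mul_zero]
  simp
  ring

lemma swp_swp {i l : ι} {j k : κ} (hil : i ≠ l) (hjk : j ≠ k) :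
    ip (swp i l j k) (swp i l j k) = 4 := by
  rw [ip_swp]; simp [swp, hil, hjk, hil.symm, hjk.symm]

lemma swp_row (i l : ι) (j k : κ) (i') : ∑ j', swp i l j k i' j' = 0 := by
  unfold swp; rw [← Finset.mul_sum, Finset.sum_sub_distrib]; simp

lemma swp_col (i l : ι) (j k : κ) (j') : ∑ i', swp i l j k i' j' = 0 := by
  unfold swp; rw [← Finset.sum_mul, Finset.sum_sub_distrib]; simp

lemma ip_add_left (x y z : ι → κ → ℤ) : ip (x + y) z = ip x z + ip y z := by
  simp [ip, add_mul, Finset.sum_add_distrib]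
lemma ip_sub_left (x y z : ι → κ → ℤ) : ip (x - y) z = ip x z - ip y z := by
  simp [ip, sub_mul, Finset.sum_sub_distrib]
lemma ip_comm (x y : ι → κ → ℤ) : ip x y = ip y x := by
  simp [ip, mul_comm]
lemma ip_self_nonneg (x : ι → κ → ℤ) : 0 ≤ ip x x :=
  Finset.sum_nonneg fun _ _ => Finset.sum_nonneg fun _ _ => mul_self_nonneg _
lemma ip_sub_sub (x s : ι → κ → ℤ) : ip (x - s) (x - s) = ip x x - 2 * ip x s + ip s s := by
  rw [ip_sub_left, ip_comm x (x - s), ip_comm s (x-s), ip_sub_left, ip_sub_left, ip_comm s x]; ring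
lemma ip_add_add (x s : ι → κ → ℤ) : ip (x + s) (x + s) = ip x x + 2 * ip x s + ip s s := by
  rw [ip_add_left, ip_comm x (x + s), ip_comm s (x+s), ip_add_left, ip_add_left, ip_comm s x]; ring

def MStep (x x' : ι → κ → ℤ) : Prop :=
  ∃ i l j k, i ≠ l ∧ j ≠ k ∧ x' = x - swp i l j k ∧ ip x' x' ≤ ip x x

def SameMar (x y : ι → κ → ℤ) : Prop :=
  (∀ i, ∑ j, x i j = ∑ j, y i j) ∧ (∀ j, ∑ i, x i j = ∑ i, y i j)

lemma exists_pos_of_neg {α : Type} [Fintype α] (g : α → ℤ) (h : ∑ i, g i = 0) (a : α) (ha : g a < 0) :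
    ∃ b, 0 < g b := by
  by_contra! hc
  have : ∑ i, g i < ∑ i : α, 0 := Finset.sum_lt_sum (fun i _ => hc i) ⟨a, Finset.mem_univ _, ha⟩
  simp at this; omega

lemma exists_neg_of_pos {α : Type} [Fintype α] (g : α → ℤ) (h : ∑ i, g i = 0) (a : α) (ha : 0 < g a) :
    ∃ b, g b < 0 := by
  obtain ⟨b, hb⟩ := exists_pos_of_neg (fun i => - g i) (by simp [h]) a (by simpa using ha)
  exact ⟨b, by simpa using hb⟩

lemma exists_pat (d : ι → κ → ℤ) (hr : ∀ i, ∑ j, d i j = 0) (hc : ∀ j, ∑ i, d i j = 0)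
    (hd : d ≠ 0) : ∃ i l j k, 0 < d i j ∧ d l j < 0 ∧ 0 < d l k ∧ d i k ≤ 0 := by
  let P : ι → Finset κ := fun i => Finset.univ.filter fun j => 0 < d i j
  have hne : (Finset.univ.filter fun i => (P i).Nonempty).Nonempty := by
    have : ∃ i j, d i j ≠ 0 := by
      by_contra! h; apply hd; ext i j; simp [h]
    obtain ⟨i, j, hij⟩ := this
    rcases lt_or_gt_of_ne hij with h | h
    · obtain ⟨b, hb⟩ := exists_pos_of_neg _ (hr i) j h
      exact ⟨i, by simp only [Finset.mem_filter, Finset.mem_univ, true_and]; exact ⟨b, by simp [P, hb]⟩⟩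
    · exact ⟨i, by simp only [Finset.mem_filter, Finset.mem_univ, true_and]; exact ⟨j, by simp [P, h]⟩⟩
  obtain ⟨i, hi, hmin⟩ := Finset.exists_min_image _ (fun i => (P i).card) hne
  simp only [Finset.mem_filter, Finset.mem_univ, true_and] at hi hmin
  obtain ⟨j, hj⟩ := hi
  have hj' : 0 < d i j := by simpa [P] using hj
  obtain ⟨l, hl⟩ := exists_neg_of_pos _ (hc j) i hj'
  obtain ⟨k0, hk0⟩ := exists_pos_of_neg _ (hr l) j hl
  have h1 := hmin l ⟨k0, by simp [P, hk0]⟩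
  have h2 : ¬ (P l ⊆ P i) := by
    intro hs
    have := Finset.eq_of_subset_of_card_le hs h1
    rw [← this] at hj
    simp [P] at hj; omega
  obtain ⟨k, hk, hk'⟩ := Finset.not_subset.mp h2
  simp [P] at hk hk'
  exact ⟨i, l, j, k, hj', hl, hk, hk'⟩

lemma mat_main (n : ℕ) : ∀ x y : ι → κ → ℤ, SameMar x y → (ip (x - y) (x - y)).toNat ≤ n →
    ∃ x', Relation.ReflTransGen MStep x x' ∧ ip x' x' ≤ ip y y := by
  induction n with
  | zero =>
    intro x y hxy hn
    by_cases h0 : x - y = 0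
    · exact ⟨x, .refl, by rw [sub_eq_zero.mp h0]⟩
    exfalso
    have : ∃ i j, (x - y) i j ≠ 0 := by
      by_contra! h; apply h0; ext i j; simp [h]
    obtain ⟨i, j, hij⟩ := this
    have h1 : ip (x-y) (x-y) ≤ 0 := by omega
    have h2 : 0 < ip (x - y) (x - y) := by
      unfold ip
      apply Finset.sum_pos' (fun _ _ => Finset.sum_nonneg fun _ _ => mul_self_nonneg _)
      refine ⟨i, Finset.mem_univ _, ?_⟩
      apply Finset.sum_pos' (fun _ _ => mul_self_nonneg _)
      exact ⟨j, Finset.mem_univ _, mul_self_pos.mpr hij⟩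
    omega
  | succ n ih =>
    intro x y hxy hn
    by_cases h0 : x - y = 0
    · exact ⟨x, .refl, by rw [sub_eq_zero.mp h0]⟩
    obtain ⟨i, l, j, k, h1, h2, h3, h4⟩ := exists_pat (x - y)
      (by intro i; simp [Finset.sum_sub_distrib, hxy.1])
      (by intro i; simp [Finset.sum_sub_distrib, hxy.2]) h0
    have hil : i ≠ l := by rintro rfl; omega
    have hjk : j ≠ k := by rintro rfl; omega
    have hss := swp_swp hil hjk
    set s := swp i l j k with hs
    have hds : 3 ≤ ip (x - y) s := by rw [hs, ip_swp]; omega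
    have hdn := ip_sub_sub (x - y) s
    have hnn := ip_self_nonneg (x - y - s)
    have hr := swp_row i l j k
    have hc := swp_col i l j k
    have hds' := ip_sub_left x y s
    have e1 := ip_sub_sub x s
    have e2 := ip_add_add y s
    by_cases hle : ip (x - s) (x - s) ≤ ip x x
    · obtain ⟨x', hx', hf⟩ := ih (x - s) y
        ⟨by intro i; simp [Finset.sum_sub_distrib, hxy.1, hs, hr],
         by intro i; simp [Finset.sum_sub_distrib, hxy.2, hs, hc]⟩
        (by rw [sub_right_comm]; omega)
      exact ⟨x', .head ⟨i, l, j, k, hil, hjk, rfl, hle⟩ hx', hf⟩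
    · obtain ⟨x', hx', hf⟩ := ih x (y + s)
        ⟨by intro i; simp [Finset.sum_add_distrib, hxy.1, hs, hr],
         by intro i; simp [Finset.sum_add_distrib, hxy.2, hs, hc]⟩
        (by rw [← sub_sub]; omega)
      exact ⟨x', hx', by omega⟩

lemma mstep_mar {x x' : ι → κ → ℤ} (h : MStep x x') : SameMar x' x := by
  obtain ⟨i, l, j, k, -, -, rfl, -⟩ := h
  exact ⟨by intro i; simp [Finset.sum_sub_distrib, swp_row],
    by intro i; simp [Finset.sum_sub_distrib, swp_col]⟩

lemma mat_min (x : ι → κ → ℤ) : ∃ x', Relation.ReflTransGen MStep x x' ∧ SameMar x' x ∧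
    ∀ y, SameMar x y → ip x' x' ≤ ip y y := by
  have hx : ∃ n : ℕ, ∃ y, SameMar x y ∧ (ip y y).toNat = n := ⟨_, x, ⟨fun _ => rfl, fun _ => rfl⟩, rfl⟩
  obtain ⟨y, hy, hyn⟩ := Nat.find_spec hx
  have hmin : ∀ z, SameMar x z → ip y y ≤ ip z z := by
    intro z hz
    have := Nat.find_min' hx ⟨z, hz, rfl⟩
    have := ip_self_nonneg z
    omega
  obtain ⟨x', h1, h2⟩ := mat_main _ x y hy le_rfl
  refine ⟨x', h1, ?_, fun z hz => h2.trans (hmin z hz)⟩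
  clear h2
  induction h1 with
  | refl => exact ⟨fun _ => rfl, fun _ => rfl⟩
  | tail _ hb ih =>
    have := mstep_mar hb
    exact ⟨fun i => (this.1 i).trans (ih.1 i), fun i => (this.2 i).trans (ih.2 i)⟩

end Mat

lemma seq_of_rtg {α : Type} {R : α → α → Prop} {a b : α} (h : Relation.ReflTransGen R a b) :
    ∃ (u : ℕ) (s : ℕ → α), s 0 = a ∧ s u = b ∧ ∀ t < u, R (s t) (s (t + 1)) := by
  induction h using Relation.ReflTransGen.head_induction_on with
  | refl => exact ⟨0, fun _ => b, rfl, rfl, by simp⟩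
  | @head a c hab _ ih =>
    obtain ⟨u, s, h0, hu, hs⟩ := ih
    refine ⟨u + 1, fun n => Nat.casesOn n a s, rfl, hu, ?_⟩
    intro t ht
    cases t with
    | zero => simpa [h0] using hab
    | succ t => exact hs t (by omega)
def X (aj : ℤ) (lam : PartitionFun) (b : ℕ) : ℤ := (lam.part b : ℤ) + aj - ((b : ℤ) + 1)
noncomputable def chi (e : ℕ) (i y : ℤ) : ℤ := if y % (e : ℤ) = i % e then 1 else 0
def Van (lam : PartitionFun) (N : ℕ) : Prop := ∀ b, N ≤ b → lam.part b = 0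

lemma tele (g : ℤ → ℤ) (aj : ℤ) (lam : PartitionFun) (N : ℕ) :
    ∑ b ∈ Finset.range N, ∑ c ∈ Finset.range (lam.part b), (g (aj + c - b) - g (aj + c - b - 1)) =
    ∑ b ∈ Finset.range N, g (X aj lam b) - ∑ b ∈ Finset.range N, g (aj - ((b:ℤ) + 1)) := by
  rw [← Finset.sum_sub_distrib]
  apply Finset.sum_congr rfl
  intro b _
  have := Finset.sum_range_sub (fun c : ℕ => g (aj + c - b - 1)) (lam.part b)
  have h2 : X aj lam b = aj + (lam.part b : ℕ) - b - 1 := by unfold X; ring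
  have h3 : aj - ((b:ℤ) + 1) = aj + ((0:ℕ) : ℤ) - b - 1 := by push_cast; ring
  rw [h2, h3, ← this]
  apply Finset.sum_congr rfl
  intro c _
  congr 2
  push_cast; ring

lemma emod_iff (e : ℕ) (x y : ℤ) : x % (e:ℤ) = y % e ↔ (e:ℤ) ∣ x - y := by
  rw [Int.emod_eq_emod_iff_emod_sub_eq_zero, Int.dvd_iff_emod_eq_zero]

lemma chi_succ (e : ℕ) (i y : ℤ) : chi e i (y + 1) = chi e (i - 1) y := by
  unfold chi
  simp only [emod_iff]
  rw [show y + 1 - i = y - (i - 1) by ring]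

lemma chi_pred (e : ℕ) (i y : ℤ) : chi e i (y - 1) = chi e (i + 1) y := by
  unfold chi
  simp only [emod_iff]
  rw [show y - 1 - i = y - (i + 1) by ring]

lemma div_step (e : ℕ) (he : 0 < e) (y : ℤ) : y / (e:ℤ) - (y - 1) / e = chi e 0 y := by
  have hE : (0:ℤ) < e := by exact_mod_cast he
  have h1 := Int.mul_ediv_add_emod y e
  have h2 := Int.emod_nonneg y hE.ne'
  have h3 := Int.emod_lt_of_pos y hE
  unfold chi
  rw [Int.zero_emod]
  split_ifs with h
  · have : (y - 1) / (e:ℤ) = y / e - 1 := by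
      rw [Int.ediv_eq_iff_of_pos hE]
      constructor <;> nlinarith
    omega
  · have : (y - 1) / (e:ℤ) = y / e := by
      rw [Int.ediv_eq_iff_of_pos hE]
      have : 1 ≤ y % (e:ℤ) := by omega
      constructor <;> nlinarith
    omega

lemma nodeCount_eq {r : ℕ} (e : ℕ) (a : Fin r → ℤ) (lam : Multipartition r) (N : Fin r → ℕ)
    (hN : ∀ j, Van (lam j) (N j)) (i : ℤ) :
    (nodeCount e a lam i : ℤ) = ∑ j, ∑ b ∈ Finset.range (N j),
      ∑ c ∈ Finset.range ((lam j).part b), chi e i (a j + c - b) := by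
  let F : Finset (Σ _ : Fin r, Σ _ : ℕ, ℕ) := (Finset.univ : Finset (Fin r)).sigma fun j =>
    (Finset.range (N j)).sigma fun b => Finset.range ((lam j).part b)
  let f : (Σ _ : Fin r, Σ _ : ℕ, ℕ) → Node r := fun p => (p.2.1, p.2.2, p.1)
  have hf : Function.Injective f := by
    rintro ⟨j, b, c⟩ ⟨j', b', c'⟩ h
    simp [f] at h
    obtain ⟨rfl, rfl, rfl⟩ := h
    rfl
  have hs : {x : Node r | (lam x.2.2).InDiag x.1 x.2.1 ∧
    (a x.2.2 + (x.2.1 : ℤ) - (x.1 : ℤ)) % (e : ℤ) = i % e} =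
    f '' ↑(F.filter fun p => (a p.1 + (p.2.2 : ℤ) - (p.2.1 : ℤ)) % (e : ℤ) = i % e) := by
    ext ⟨b, c, j⟩
    simp only [Set.mem_ofPred_eq, Set.mem_image, Finset.coe_filter, PartitionFun.InDiag]
    constructor
    · rintro ⟨h1, h2⟩
      refine ⟨⟨j, b, c⟩, ⟨?_, h2⟩, rfl⟩
      simp only [F, Finset.mem_sigma, Finset.mem_univ, Finset.mem_range, true_and]
      refine ⟨?_, h1⟩
      by_contra hb
      have := hN j b (by omega)
      omega
    · rintro ⟨⟨j', b', c'⟩, ⟨h1, h2⟩, h3⟩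
      simp [f] at h3
      obtain ⟨rfl, rfl, rfl⟩ := h3
      simp only [F, Finset.mem_sigma, Finset.mem_univ, Finset.mem_range, true_and] at h1
      exact ⟨h1.2, h2⟩
  unfold nodeCount
  rw [hs, Set.ncard_image_of_injective _ hf, Set.ncard_coe_finset, Finset.card_filter]
  simp only [F, Finset.sum_sigma]
  push_cast
  rfl

lemma removableCount_eq {r : ℕ} (e : ℕ) (a : Fin r → ℤ) (lam : Multipartition r) (i : ℤ) (j : Fin r)
    (N : ℕ) (hN : Van (lam j) N) :
    (removableCount e a lam i j : ℤ) = ∑ b ∈ Finset.range N,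
      if (lam j).part (b + 1) < (lam j).part b then chi e i (X (a j) (lam j) b) else 0 := by
  let f : ℕ → ℕ × ℕ := fun b => (b, (lam j).part b - 1)
  have hf : Function.Injective f := by
    intro b b' h
    simp [f] at h
    exact h.1
  have hs : {p : ℕ × ℕ | (lam j).Removable p.1 p.2 ∧
    (a j + (p.2 : ℤ) - (p.1 : ℤ)) % (e : ℤ) = i % e} =
    f '' ↑((Finset.range N).filter fun b => (lam j).part (b + 1) < (lam j).part b ∧
      (X (a j) (lam j) b) % (e : ℤ) = i % e) := by
    ext ⟨b, c⟩
    simp only [Set.mem_ofPred_eq, Set.mem_image, Finset.coe_filter, PartitionFun.Removable, Finset.mem_range]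
    constructor
    · rintro ⟨⟨h1, h2⟩, h3⟩
      refine ⟨b, ⟨?_, by omega, ?_⟩, by simp [f, h1]⟩
      · by_contra hb
        have := hN b (by omega)
        omega
      · rw [← h3]; congr 1; unfold X; rw [h1]; push_cast; ring
    · rintro ⟨b', ⟨h1, h2, h3⟩, h4⟩
      simp [f] at h4
      obtain ⟨rfl, rfl⟩ := h4
      refine ⟨⟨by omega, by omega⟩, ?_⟩
      rw [← h3]; congr 1; unfold X; push_cast [show 1 ≤ (lam j).part b' by omega]; ring
  unfold removableCount
  rw [hs, Set.ncard_image_of_injective _ hf, Set.ncard_coe_finset, Finset.card_filter]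
  push_cast
  apply Finset.sum_congr rfl
  intro b _
  unfold chi
  rw [ite_and]

lemma addableCount_eq {r : ℕ} (e : ℕ) (a : Fin r → ℤ) (lam : Multipartition r) (i : ℤ) (j : Fin r)
    (N : ℕ) (hN : Van (lam j) N) :
    (addableCount e a lam i j : ℤ) = ∑ b ∈ Finset.range (N + 1),
      if (b = 0 ∨ (lam j).part b < (lam j).part (b - 1)) then chi e i (X (a j) (lam j) b + 1) else 0 := by
  let f : ℕ → ℕ × ℕ := fun b => (b, (lam j).part b)
  have hf : Function.Injective f := by
    intro b b' h
    simp [f] at h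
    exact h.1
  have hs : {p : ℕ × ℕ | (lam j).Addable p.1 p.2 ∧
    (a j + (p.2 : ℤ) - (p.1 : ℤ)) % (e : ℤ) = i % e} =
    f '' ↑((Finset.range (N + 1)).filter fun b => (b = 0 ∨ (lam j).part b < (lam j).part (b - 1)) ∧
      (X (a j) (lam j) b + 1) % (e : ℤ) = i % e) := by
    ext ⟨b, c⟩
    simp only [Set.mem_ofPred_eq, Set.mem_image, Finset.coe_filter, PartitionFun.Addable, Finset.mem_range]
    constructor
    · rintro ⟨⟨h1, h2⟩, h3⟩
      refine ⟨b, ⟨?_, h2, ?_⟩, by simp [f, h1]⟩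
      · by_contra hb
        have := hN (b-1) (by omega)
        omega
      · rw [← h3]; congr 1; unfold X; rw [h1]; ring
    · rintro ⟨b', ⟨h1, h2, h3⟩, h4⟩
      simp [f] at h4
      obtain ⟨rfl, rfl⟩ := h4
      refine ⟨⟨rfl, h2⟩, ?_⟩
      rw [← h3]; congr 1; unfold X; ring
  unfold addableCount
  rw [hs, Set.ncard_image_of_injective _ hf, Set.ncard_coe_finset, Finset.card_filter]
  push_cast
  apply Finset.sum_congr rfl
  intro b _
  unfold chi
  rw [ite_and]

lemma delta_eq_s1 {r : ℕ} (e : ℕ) (a : Fin r → ℤ) (lam : Multipartition r) (i : ℤ) (j : Fin r)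
    (N : ℕ) (hN : Van (lam j) N) :
    delta e a lam i j = ∑ b ∈ Finset.range N, chi e i (X (a j) (lam j) b)
      - ∑ b ∈ Finset.range N, chi e (i - 1) (X (a j) (lam j) b) - chi e i (a j - N) := by
  unfold delta
  rw [removableCount_eq e a lam i j N hN, addableCount_eq e a lam i j N hN, Finset.sum_range_succ']
  have h1 : ∑ b ∈ Finset.range N, chi e (i - 1) (X (a j) (lam j) b) + chi e i (a j - N) =
      ∑ b ∈ Finset.range (N + 1), chi e i (X (a j) (lam j) b + 1) := by
    rw [Finset.sum_range_succ]
    congr 1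
    · simp only [chi_succ]
    · congr 1; unfold X; rw [hN N le_rfl]; push_cast; ring
  rw [sub_sub (∑ b ∈ Finset.range N, chi e i (X (a j) (lam j) b)), h1, Finset.sum_range_succ']
  simp only [true_or, if_true, add_tsub_cancel_right, Nat.add_eq_zero_iff, one_ne_zero, and_false, false_or]
  rw [← sub_sub, ← sub_sub, ← Finset.sum_sub_distrib, ← Finset.sum_sub_distrib]
  congr 1
  apply Finset.sum_congr rfl
  intro b _
  split_ifs with h
  · rfl
  · have h2 := (lam j).antitone (Nat.le_succ b)
    have : X (a j) (lam j) (b + 1) + 1 = X (a j) (lam j) b := by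
      unfold X; simp at h2; push_cast; omega
    rw [this]; ring

/-! Multi level -/
def NN {r : ℕ} (e : ℕ) (a : Fin r → ℤ) (M : ℤ) (j : Fin r) : ℕ := (a j + e * M).toNat
def Good {r : ℕ} (e : ℕ) (a : Fin r → ℤ) (M : ℤ) (lam : Multipartition r) : Prop :=
  ∀ j, 0 ≤ a j + e * M ∧ Van (lam j) (NN e a M j)
noncomputable def SS {r : ℕ} (e : ℕ) (a : Fin r → ℤ) (M : ℤ) (lam : Multipartition r) (i : ℤ) : ℤ :=
  ∑ j, ∑ b ∈ Finset.range (NN e a M j), chi e i (X (a j) (lam j) b)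
noncomputable def VV {r : ℕ} (e : ℕ) (a : Fin r → ℤ) (M : ℤ) (lam : Multipartition r) : ℤ :=
  ∑ j, ∑ b ∈ Finset.range (NN e a M j), X (a j) (lam j) b / (e : ℤ)

lemma exists_good {r : ℕ} (e : ℕ) (he : 0 < e) (a : Fin r → ℤ) (lam : Multipartition r) :
    ∃ M0 : ℤ, 0 ≤ M0 ∧ ∀ M ≥ M0, Good e a M lam := by
  choose n hn using fun j => (lam j).finite_support
  refine ⟨∑ j, (|a j| + n j), Finset.sum_nonneg fun j _ => by positivity, ?_⟩
  intro M hM j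
  have h1 : |a j| + n j ≤ ∑ j, (|a j| + (n j : ℤ)) :=
    Finset.single_le_sum (f := fun j => |a j| + (n j : ℤ)) (fun j _ => by positivity) (Finset.mem_univ j)
  have h0 : (0 : ℤ) ≤ |a j| + n j := by positivity
  have h2 : M ≤ e * M := by
    have : (1 : ℤ) ≤ e := by exact_mod_cast he
    nlinarith
  have h3 := neg_abs_le (a j)
  refine ⟨by omega, fun b hb => hn j b ?_⟩
  unfold NN at hb
  omega

lemma node_diff {r : ℕ} (e : ℕ) (a : Fin r → ℤ) (M : ℤ) (lam : Multipartition r) (h : Good e a M lam)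
    (i : ℤ) : (nodeCount e a lam i : ℤ) - nodeCount e a lam (i + 1) = SS e a M lam i -
      ∑ j, ∑ b ∈ Finset.range (NN e a M j), chi e i (a j - ((b:ℤ) + 1)) := by
  rw [nodeCount_eq e a lam _ (fun j => (h j).2), nodeCount_eq e a lam _ (fun j => (h j).2)]
  unfold SS
  rw [← Finset.sum_sub_distrib, ← Finset.sum_sub_distrib]
  apply Finset.sum_congr rfl
  intro j _
  rw [← tele, ← Finset.sum_sub_distrib]
  apply Finset.sum_congr rfl
  intro b _
  rw [← Finset.sum_sub_distrib]
  apply Finset.sum_congr rfl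
  intro c _
  rw [chi_pred]

lemma node_zero {r : ℕ} (e : ℕ) (he : 0 < e) (a : Fin r → ℤ) (M : ℤ) (lam : Multipartition r)
    (h : Good e a M lam) : (nodeCount e a lam 0 : ℤ) = VV e a M lam -
      ∑ j, ∑ b ∈ Finset.range (NN e a M j), (a j - ((b:ℤ) + 1)) / (e : ℤ) := by
  rw [nodeCount_eq e a lam _ (fun j => (h j).2)]
  unfold VV
  rw [← Finset.sum_sub_distrib]
  apply Finset.sum_congr rfl
  intro j _
  rw [← tele (fun y => y / (e:ℤ))]
  simp only [div_step e he]

lemma hub_eq {r : ℕ} (e : ℕ) (a : Fin r → ℤ) (M : ℤ) (lam : Multipartition r)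
    (h : Good e a M lam) (i : ℤ) : hub e a lam i = SS e a M lam i - SS e a M lam (i - 1) -
      ∑ j, chi e i (a j - NN e a M j) := by
  unfold hub SS
  rw [← Finset.sum_sub_distrib, ← Finset.sum_sub_distrib]
  exact Finset.sum_congr rfl fun j _ => delta_eq_s1 e a lam i j _ (h j).2

lemma const_of_step (g : ℤ → ℤ) (h : ∀ i, g i = g (i + 1)) (i : ℤ) : g i = g 0 := by
  induction i using Int.induction_on with
  | zero => rfl
  | succ n ih => rw [← h, ih]
  | pred n ih => rw [h]; simpa using ih

lemma weight_le {r : ℕ} (e : ℕ) (he : 0 < e) (a : Fin r → ℤ) (M : ℤ) (lam mu : Multipartition r)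
    (h : Good e a M lam) (h' : Good e a M mu) (hS : ∀ i, SS e a M lam i = SS e a M mu i)
    (hV : VV e a M lam ≤ VV e a M mu) : weight e a lam ≤ weight e a mu := by
  have h1 : ∀ i, (nodeCount e a lam i : ℤ) - nodeCount e a lam (i + 1) =
      (nodeCount e a mu i : ℤ) - nodeCount e a mu (i + 1) := by
    intro i; rw [node_diff e a M lam h, node_diff e a M mu h', hS]
  have h2 := const_of_step (fun i => (nodeCount e a lam i : ℤ) - nodeCount e a mu i)
    (by intro i; have := h1 i; omega)
  have h3 := node_zero e he a M lam h
  have h4 := node_zero e he a M mu h'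
  have h5 : ∀ i, nodeCount e a lam i ≤ nodeCount e a mu i := by
    intro i; have := h2 i; omega
  unfold weight
  apply sub_le_sub
  · exact Finset.sum_le_sum fun j _ => by exact_mod_cast h5 _
  · apply le_of_eq
    congr 1
    apply Finset.sum_congr rfl
    intro i _
    have : ((nodeCount e a lam i : ℚ) - nodeCount e a lam (i + 1)) =
      (nodeCount e a mu i : ℚ) - nodeCount e a mu (i + 1) := by exact_mod_cast h1 i
    rw [this]

lemma sum_fin_res (e : ℕ) (he : 0 < e) (y v : ℤ) :
    ∑ i : Fin e, (if y % (e:ℤ) = ((i : ℕ) : ℤ) % e then v else 0) = v := by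
  have hE : (0:ℤ) < e := by exact_mod_cast he
  have h2 := Int.emod_nonneg y hE.ne'
  have h3 := Int.emod_lt_of_pos y hE
  rw [Finset.sum_eq_single (⟨(y % e).toNat, by omega⟩ : Fin e)]
  · rw [if_pos]
    simp only
    rw [Int.toNat_of_nonneg h2, Int.emod_emod_of_dvd _ dvd_rfl]
  · rintro ⟨i, hi⟩ _ hne
    rw [if_neg]
    intro h
    apply hne
    simp only at h
    rw [Int.emod_eq_of_lt (a := (i:ℤ)) (by omega) (by omega)] at h
    simp [h]
  · simp

lemma SS_total {r : ℕ} (e : ℕ) (he : 0 < e) (a : Fin r → ℤ) (M : ℤ) (lam : Multipartition r) :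
    ∑ i : Fin e, SS e a M lam ((i : ℕ) : ℤ) = ∑ j, (NN e a M j : ℤ) := by
  unfold SS
  rw [Finset.sum_comm]
  apply Finset.sum_congr rfl
  intro j _
  rw [Finset.sum_comm]
  unfold chi
  simp only [sum_fin_res e he]
  simp

lemma sameHub_iff {r : ℕ} (e : ℕ) (he : 0 < e) (a : Fin r → ℤ) (M : ℤ) (lam mu : Multipartition r)
    (h : Good e a M lam) (h' : Good e a M mu) :
    SameHub e a lam mu ↔ ∀ i, SS e a M lam i = SS e a M mu i := by
  constructor
  · intro hs
    have h2 := const_of_step (fun i => SS e a M lam i - SS e a M mu i) (by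
      intro i
      have := hs (i + 1)
      rw [hub_eq e a M lam h, hub_eq e a M mu h'] at this
      simp only [add_sub_cancel_right] at this
      omega)
    have h3 : ∑ i : Fin e, (SS e a M lam ((i : ℕ) : ℤ) - SS e a M mu ((i : ℕ) : ℤ)) = 0 := by
      rw [Finset.sum_sub_distrib, SS_total e he, SS_total e he, sub_self]
    simp only [h2] at h3
    rw [Finset.sum_const] at h3
    simp at h3
    intro i
    have := h2 i
    rcases h3 with h3 | h3 <;> omega
  · intro hs i
    rw [hub_eq e a M lam h, hub_eq e a M mu h', hs, hs]

def SetLev (e : ℕ) (S : Set ℤ) (L : Fin e → ℤ) : Prop :=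
  ∀ (i : Fin e) (q : ℤ), (q * (e:ℤ) + ((i : ℕ) : ℤ) ∈ S ↔ q < L i)

lemma div_unique' {e : ℕ} (i : Fin e) (q : ℤ) :
    (q * (e:ℤ) + ((i : ℕ) : ℤ)) / e = q ∧ (q * (e:ℤ) + ((i : ℕ) : ℤ)) % e = ((i : ℕ) : ℤ) := by
  have hi : ((i:ℕ):ℤ) < e := by exact_mod_cast i.2
  have hE : (0:ℤ) < e := by omega
  have h1 : (q * (e:ℤ) + ((i : ℕ) : ℤ)) / e = q := by
    rw [Int.ediv_eq_iff_of_pos hE]; constructor <;> nlinarith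
  refine ⟨h1, ?_⟩
  have := Int.mul_ediv_add_emod (q * (e:ℤ) + ((i : ℕ) : ℤ)) e
  rw [h1] at this; linarith

lemma pair_inj {e : ℕ} {i i' : Fin e} {q q' : ℤ}
    (h : q * (e:ℤ) + ((i : ℕ) : ℤ) = q' * (e:ℤ) + ((i' : ℕ) : ℤ)) : i = i' ∧ q = q' := by
  have h1 := div_unique' i q
  have h2 := div_unique' i' q'
  rw [h] at h1
  refine ⟨?_, h1.1.symm.trans h2.1⟩
  have := h1.2.symm.trans h2.2
  ext; exact_mod_cast this

lemma exists_pair (e : ℕ) (he : 0 < e) (y : ℤ) : ∃ (i : Fin e) (q : ℤ), y = q * (e:ℤ) + ((i : ℕ) : ℤ) := by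
  have hE : (0:ℤ) < e := by exact_mod_cast he
  have h2 := Int.emod_nonneg y hE.ne'
  have h3 := Int.emod_lt_of_pos y hE
  have := Int.mul_ediv_add_emod y e
  refine ⟨⟨(y % e).toNat, by omega⟩, y / e, ?_⟩
  simp only [Int.toNat_of_nonneg h2]
  linarith

lemma mem_beta {aj : ℤ} {lam : PartitionFun} {x : ℤ} : x ∈ betaSet aj lam ↔ ∃ b, x = X aj lam b := Iff.rfl

lemma X_lt (aj : ℤ) (lam : PartitionFun) {b b' : ℕ} (h : b < b') : X aj lam b' < X aj lam b := by
  have := lam.antitone h.le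
  unfold X; omega

lemma X_inj (aj : ℤ) (lam : PartitionFun) : Function.Injective (X aj lam) := by
  have : StrictAnti (X aj lam) := fun _ _ h => X_lt aj lam h
  exact this.injective

lemma core_levels {e : ℕ} (he : 0 < e) {aj : ℤ} {lam : PartitionFun} (h : IsECore e aj lam) :
    ∃ L : Fin e → ℤ, SetLev e (betaSet aj lam) L := by
  have hE : (1:ℤ) ≤ e := by exact_mod_cast he
  have hdown : ∀ (i : Fin e) (q : ℤ) (n : ℕ), q * (e:ℤ) + ((i : ℕ) : ℤ) ∈ betaSet aj lam →
      (q - n) * (e:ℤ) + ((i : ℕ) : ℤ) ∈ betaSet aj lam := by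
    intro i q n hq
    induction n with
    | zero => simpa using hq
    | succ n ih =>
      have := h _ ih
      convert this using 1
      push_cast; ring
  obtain ⟨N, hN⟩ := lam.finite_support
  have key : ∀ i : Fin e, ∃ L : ℤ, ∀ q : ℤ, (q * (e:ℤ) + ((i : ℕ) : ℤ) ∈ betaSet aj lam ↔ q < L) := by
    intro i
    have hb : ∃ b : ℤ, ∀ z : ℤ, (z * (e:ℤ) + ((i : ℕ) : ℤ) ∉ betaSet aj lam) → b ≤ z := by
      refine ⟨-(|aj| + N + 1), fun z hz => ?_⟩
      by_contra hlt
      apply hz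
      rw [mem_beta]
      have hi := i.2
      have h3 := neg_abs_le aj
      have h5 := abs_nonneg aj
      have h4 : z * e + ((i:ℕ):ℤ) ≤ aj - N - 1 := by
        have : ((i:ℕ):ℤ) + 1 ≤ e := by exact_mod_cast hi
        have : (z + 1) * e ≤ (z + 1) * 1 := by
          apply mul_le_mul_of_nonpos_left hE; omega
        linarith
      refine ⟨(aj - 1 - (z * e + ((i:ℕ):ℤ))).toNat, ?_⟩
      unfold X
      rw [hN _ (by omega)]
      push_cast
      omega
    have hin : ∃ z : ℤ, z * (e:ℤ) + ((i : ℕ) : ℤ) ∉ betaSet aj lam := by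
      refine ⟨|X aj lam 0| + 1, fun hz => ?_⟩
      obtain ⟨b, hb⟩ := mem_beta.mp hz
      have h1 : X aj lam b ≤ X aj lam 0 := by
        rcases Nat.eq_zero_or_pos b with rfl | hb
        · rfl
        · exact (X_lt aj lam hb).le
      have h2 := le_abs_self (X aj lam 0)
      have h3 : |X aj lam 0| + 1 ≤ (|X aj lam 0| + 1) * e := by
        have := abs_nonneg (X aj lam 0)
        nlinarith
      omega
    obtain ⟨L, hL1, hL2⟩ := Int.exists_least_of_bdd hb hin
    refine ⟨L, fun q => ⟨fun hq => ?_, fun hq => ?_⟩⟩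
    · by_contra hlt
      apply hL1
      have := hdown i q (q - L).toNat hq
      convert this using 3
      omega
    · by_contra hc
      have := hL2 q hc
      omega
  choose L hL using key
  exact ⟨L, hL⟩

lemma levels_core {e : ℕ} (he : 0 < e) {aj : ℤ} {lam : PartitionFun} {L : Fin e → ℤ}
    (h : SetLev e (betaSet aj lam) L) : IsECore e aj lam := by
  intro x hx
  obtain ⟨i, q, rfl⟩ := exists_pair e he x
  rw [h] at hx
  rw [show q * (e:ℤ) + ((i : ℕ) : ℤ) - e = (q - 1) * (e:ℤ) + ((i : ℕ) : ℤ) by ring, h]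
  omega

lemma moveBead_lev {e : ℕ} (he : 0 < e) {S : Set ℤ} {L : Fin e → ℤ} (h : SetLev e S L) {i l : Fin e}
    (hil : i ≠ l) : SetLev e (moveBead e i l S)
      (fun t => L t - ((if t = i then 1 else 0) - (if t = l then 1 else 0))) := by
  have hE : (0:ℤ) < e := by exact_mod_cast he
  have hmod : ∀ t : Fin e, ((t:ℕ):ℤ) % e = ((t:ℕ):ℤ) := fun t =>
    Int.emod_eq_of_lt (by omega) (by exact_mod_cast t.2)
  have hsup : sSup {x : ℤ | x % (e : ℤ) = ((i:ℕ) : ℤ) % e ∧ x ∈ S} = (L i - 1) * e + ((i:ℕ):ℤ) := by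
    apply IsGreatest.csSup_eq
    constructor
    · exact ⟨by rw [(div_unique' i _).2, hmod], (h _ _).2 (by omega)⟩
    · rintro x ⟨hx1, hx2⟩
      obtain ⟨t, q, rfl⟩ := exists_pair e he x
      rw [(div_unique' t _).2, hmod] at hx1
      obtain rfl : t = i := by ext; exact_mod_cast hx1
      rw [h] at hx2
      have : q * (e:ℤ) ≤ (L t - 1) * e := mul_le_mul_of_nonneg_right (by omega) hE.le
      linarith
  have hinf : sInf {x : ℤ | x % (e : ℤ) = ((l:ℕ) : ℤ) % e ∧ x ∉ S} = (L l) * e + ((l:ℕ):ℤ) := by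
    apply IsLeast.csInf_eq
    constructor
    · exact ⟨by rw [(div_unique' l _).2, hmod], by rw [h]; omega⟩
    · rintro x ⟨hx1, hx2⟩
      obtain ⟨t, q, rfl⟩ := exists_pair e he x
      rw [(div_unique' t _).2, hmod] at hx1
      obtain rfl : t = l := by ext; exact_mod_cast hx1
      rw [h] at hx2
      have : (L t) * (e:ℤ) ≤ q * e := mul_le_mul_of_nonneg_right (by omega) hE.le
      linarith
  intro t q
  unfold moveBead
  rw [hsup, hinf, Set.mem_insert_iff, Set.mem_sdiff, Set.mem_singleton_iff, h]
  have e1 : (q * (e:ℤ) + ((t:ℕ):ℤ) = (L l) * e + ((l:ℕ):ℤ)) ↔ (t = l ∧ q = L l) :=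
    ⟨pair_inj, by rintro ⟨rfl, rfl⟩; rfl⟩
  have e2 : (q * (e:ℤ) + ((t:ℕ):ℤ) = (L i - 1) * e + ((i:ℕ):ℤ)) ↔ (t = i ∧ q = L i - 1) :=
    ⟨pair_inj, by rintro ⟨rfl, rfl⟩; rfl⟩
  rw [e1, e2]
  by_cases hti : t = i
  · subst hti; simp only [hil, if_true, if_false, true_and, false_and, false_or]; omega
  · by_cases htl : t = l
    · subst htl; simp only [hti, if_true, if_false, true_and, false_and, not_false_eq_true, and_true]; omega
    · simp only [hti, htl, if_false, false_and, false_or, not_false_eq_true, and_true]; omega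

lemma setLev_ext {e : ℕ} (he : 0 < e) {S S' : Set ℤ} {L : Fin e → ℤ} (h : SetLev e S L)
    (h' : SetLev e S' L) : S = S' := by
  ext y
  obtain ⟨t, q, rfl⟩ := exists_pair e he y
  rw [h, h']

def MLev {r : ℕ} (e : ℕ) (a : Fin r → ℤ) (lam : Multipartition r) (x : Fin e → Fin r → ℤ) : Prop :=
  ∀ j, SetLev e (betaSet (a j) (lam j)) (fun i => x i j)

lemma isSwap_of {e r : ℕ} (he : 0 < e) (a : Fin r → ℤ) {m m' : Multipartition r}
    {x : Fin e → Fin r → ℤ} {i l : Fin e} {j k : Fin r} (hil : i ≠ l) (hjk : j ≠ k)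
    (h : MLev e a m x) (h' : MLev e a m' (x - swp i l j k)) : IsSwap e a i l j k m m' := by
  intro t
  refine setLev_ext he (h' t) ?_
  unfold swapSets
  by_cases htk : t = k
  · subst htk
    rw [Function.update_self, Function.update_of_ne hjk.symm]
    convert moveBead_lev he (h t) hil.symm using 2
    simp only [swp, Pi.sub_apply, hjk.symm, if_true, if_false]; split_ifs <;> ring
  · rw [Function.update_of_ne htk]
    by_cases htj : t = j
    · subst htj
      rw [Function.update_self]
      convert moveBead_lev he (h t) hil using 2
      simp only [swp, Pi.sub_apply, hjk, if_true, if_false]; split_ifs <;> ring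
    · rw [Function.update_of_ne htj]
      convert h t using 2
      simp [swp, htk, htj]

/-! counting on runners -/
noncomputable def QQ (e : ℕ) (aj : ℤ) (lam : PartitionFun) (N : ℕ) (i : Fin e) : Finset ℤ :=
  ((Finset.range N).filter fun b => X aj lam b % (e:ℤ) = ((i:ℕ):ℤ) % e).image fun b => X aj lam b / (e:ℤ)

lemma QQ_inj (e : ℕ) (aj : ℤ) (lam : PartitionFun) (N : ℕ) (i : Fin e) :
    Set.InjOn (fun b => X aj lam b / (e:ℤ))
      ↑((Finset.range N).filter fun b => X aj lam b % (e:ℤ) = ((i:ℕ):ℤ) % e) := by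
  intro b hb b' hb' hq
  simp only [Finset.coe_filter, Set.mem_ofPred_eq] at hb hb'
  apply X_inj aj lam
  simp only at hq
  rw [← Int.mul_ediv_add_emod (X aj lam b) e, ← Int.mul_ediv_add_emod (X aj lam b') e, hq, hb.2, hb'.2]

lemma QQ_card (e : ℕ) (aj : ℤ) (lam : PartitionFun) (N : ℕ) (i : Fin e) :
    ((QQ e aj lam N i).card : ℤ) = ∑ b ∈ Finset.range N, chi e ((i:ℕ):ℤ) (X aj lam b) := by
  unfold QQ
  rw [Finset.card_image_of_injOn (QQ_inj e aj lam N i), Finset.card_filter]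
  push_cast; rfl

lemma QQ_card_total (e : ℕ) (he : 0 < e) (aj : ℤ) (lam : PartitionFun) (N : ℕ) :
    ∑ i : Fin e, ((QQ e aj lam N i).card : ℤ) = N := by
  simp only [QQ_card, chi]
  rw [Finset.sum_comm]
  simp only [sum_fin_res e he]
  simp

lemma QQ_sum_total (e : ℕ) (he : 0 < e) (aj : ℤ) (lam : PartitionFun) (N : ℕ) :
    ∑ i : Fin e, ∑ q ∈ QQ e aj lam N i, q = ∑ b ∈ Finset.range N, X aj lam b / (e:ℤ) := by
  have : ∀ i : Fin e, ∑ q ∈ QQ e aj lam N i, q = ∑ b ∈ Finset.range N,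
      if X aj lam b % (e:ℤ) = ((i:ℕ):ℤ) % e then X aj lam b / (e:ℤ) else 0 := by
    intro i
    unfold QQ
    rw [Finset.sum_image (QQ_inj e aj lam N i), Finset.sum_filter]
  simp only [this]
  rw [Finset.sum_comm]
  simp only [sum_fin_res e he]

lemma QQ_mem (e : ℕ) (aj : ℤ) (lam : PartitionFun) (N : ℕ) (M : ℤ) (hN : (N:ℤ) = aj + e * M)
    (hv : Van lam N) (i : Fin e) (q : ℤ) :
    q ∈ QQ e aj lam N i ↔ -M ≤ q ∧ q * (e:ℤ) + ((i:ℕ):ℤ) ∈ betaSet aj lam := by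
  have hi : ((i:ℕ):ℤ) < e := by exact_mod_cast i.2
  have hE : (0:ℤ) < e := by omega
  have hmod : ((i:ℕ):ℤ) % e = ((i:ℕ):ℤ) := Int.emod_eq_of_lt (by omega) hi
  unfold QQ
  simp only [Finset.mem_image, Finset.mem_filter, Finset.mem_range, hmod]
  constructor
  · rintro ⟨b, ⟨hb, hb2⟩, rfl⟩
    constructor
    · rw [Int.le_ediv_iff_mul_le hE]
      unfold X
      have : (b:ℤ) + 1 ≤ N := by exact_mod_cast hb
      have h0 : (0:ℤ) ≤ lam.part b := by positivity
      linarith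
    · rw [mem_beta]
      refine ⟨b, ?_⟩
      rw [← hb2]
      have := Int.mul_ediv_add_emod (X aj lam b) e
      linarith
  · rintro ⟨h1, h2⟩
    obtain ⟨b, hb⟩ := mem_beta.mp h2
    refine ⟨b, ⟨?_, by rw [← hb]; exact (div_unique' i q).2⟩, by rw [← hb]; exact (div_unique' i q).1⟩
    by_contra hlt
    have hp := hv b (by omega)
    unfold X at hb
    rw [hp] at hb
    have : (-M) * e ≤ q * e := mul_le_mul_of_nonneg_right h1 hE.le
    push_cast at hb
    have : (N:ℤ) ≤ b := by exact_mod_cast (not_lt.mp hlt)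
    linarith

lemma sum_lb (k : ℕ) : ∀ (Q : Finset ℤ) (A : ℤ), Q.card = k → (∀ q ∈ Q, A ≤ q) →
    (A + k) * (A + k - 1) - A * (A - 1) ≤ 2 * ∑ q ∈ Q, q := by
  induction k with
  | zero => intro Q A hQ _; simp [Finset.card_eq_zero.mp hQ]
  | succ k ih =>
    intro Q A hQ hA
    have hne : Q.Nonempty := by rw [← Finset.card_pos]; omega
    have hm := Finset.max'_mem Q hne
    set m := Q.max' hne with hmdef
    have h1 := ih (Q.erase m) A (by rw [Finset.card_erase_of_mem hm]; omega)
      (fun q hq => hA q (Finset.mem_of_mem_erase hq))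
    have h2 := Finset.add_sum_erase Q (fun q => q) hm
    have h3 : Q ⊆ Finset.Icc A m := fun q hq => Finset.mem_Icc.mpr ⟨hA q hq, Finset.le_max' Q q hq⟩
    have h4 := Finset.card_le_card h3
    rw [hQ, Int.card_Icc] at h4
    have h5 : A + k ≤ m := by omega
    push_cast
    nlinarith

lemma sum_gauss (k : ℕ) (A : ℤ) :
    2 * ∑ q ∈ Finset.Ico A (A + k), q = (A + k) * (A + k - 1) - A * (A - 1) := by
  induction k with
  | zero => simp
  | succ k ih =>
    have : Finset.Ico A (A + ((k + 1 : ℕ) : ℤ)) = insert (A + (k:ℤ)) (Finset.Ico A (A + k)) := by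
      ext q; simp only [Finset.mem_Ico, Finset.mem_insert]; push_cast; omega
    rw [this, Finset.sum_insert (by simp), mul_add, ih]
    push_cast; ring

noncomputable def yy {r : ℕ} (e : ℕ) (a : Fin r → ℤ) (M : ℤ) (lam : Multipartition r) :
    Fin e → Fin r → ℤ := fun i j => ((QQ e (a j) (lam j) (NN e a M j) i).card : ℤ) - M

lemma yy_SS {r : ℕ} (e : ℕ) (a : Fin r → ℤ) (M : ℤ) (lam : Multipartition r) (i : Fin e) :
    ∑ j, yy e a M lam i j = SS e a M lam ((i:ℕ):ℤ) - r * M := by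
  unfold yy SS
  simp only [QQ_card]
  simp [Finset.sum_sub_distrib]

lemma yy_charge {r : ℕ} (e : ℕ) (he : 0 < e) (a : Fin r → ℤ) (M : ℤ) (lam : Multipartition r)
    (h : Good e a M lam) (j : Fin r) : ∑ i, yy e a M lam i j = a j := by
  unfold yy
  rw [Finset.sum_sub_distrib, QQ_card_total e he]
  have := (h j).1
  simp [NN]
  omega

lemma VV_eq {r : ℕ} (e : ℕ) (he : 0 < e) (a : Fin r → ℤ) (M : ℤ) (lam : Multipartition r) :
    VV e a M lam = ∑ i : Fin e, ∑ j, ∑ q ∈ QQ e (a j) (lam j) (NN e a M j) i, q := by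
  rw [Finset.sum_comm]
  simp only [QQ_sum_total e he]
  rfl

noncomputable def phi {e r : ℕ} (M : ℤ) (y : Fin e → Fin r → ℤ) : ℤ :=
  ∑ i, ∑ j, (y i j * (y i j - 1) - (-M) * (-M - 1))

lemma NN_cast {r : ℕ} {e : ℕ} {a : Fin r → ℤ} {M : ℤ} {lam : Multipartition r}
    (h : Good e a M lam) (j : Fin r) : (NN e a M j : ℤ) = a j + e * M :=
  Int.toNat_of_nonneg (h j).1

lemma phi_le {r : ℕ} (e : ℕ) (he : 0 < e) (a : Fin r → ℤ) (M : ℤ) (lam : Multipartition r)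
    (h : Good e a M lam) : phi M (yy e a M lam) ≤ 2 * VV e a M lam := by
  rw [VV_eq e he, Finset.mul_sum]
  apply Finset.sum_le_sum
  intro i _
  rw [Finset.mul_sum]
  apply Finset.sum_le_sum
  intro j _
  have := sum_lb _ (QQ e (a j) (lam j) (NN e a M j) i) (-M) rfl (fun q hq =>
    ((QQ_mem e (a j) (lam j) _ M (NN_cast h j) (h j).2 i q).1 hq).1)
  unfold yy
  rw [neg_add_eq_sub] at this
  exact this

lemma lev_QQ {r : ℕ} {e : ℕ} {a : Fin r → ℤ} {M : ℤ} {lam : Multipartition r}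
    (h : Good e a M lam) {x : Fin e → Fin r → ℤ} (hx : MLev e a lam x) (i : Fin e) (j : Fin r) :
    QQ e (a j) (lam j) (NN e a M j) i = Finset.Ico (-M) (x i j) := by
  ext q
  rw [QQ_mem e (a j) (lam j) _ M (NN_cast h j) (h j).2 i q, hx j, Finset.mem_Ico]

lemma lev_yy {r : ℕ} {e : ℕ} {a : Fin r → ℤ} {M : ℤ} {lam : Multipartition r}
    (h : Good e a M lam) {x : Fin e → Fin r → ℤ} (hx : MLev e a lam x) (hM : ∀ i j, -M ≤ x i j) :
    yy e a M lam = x := by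
  ext i j
  unfold yy
  rw [lev_QQ h hx, Int.card_Ico]
  have := hM i j
  omega

lemma lev_phi {r : ℕ} {e : ℕ} (he : 0 < e) {a : Fin r → ℤ} {M : ℤ} {lam : Multipartition r}
    (h : Good e a M lam) {x : Fin e → Fin r → ℤ} (hx : MLev e a lam x) (hM : ∀ i j, -M ≤ x i j) :
    2 * VV e a M lam = phi M x := by
  rw [VV_eq e he, Finset.mul_sum]
  apply Finset.sum_congr rfl
  intro i _
  rw [Finset.mul_sum]
  apply Finset.sum_congr rfl
  intro j _
  rw [lev_QQ h hx]
  have := sum_gauss (x i j + M).toNat (-M)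
  have h2 := hM i j
  rw [Int.toNat_of_nonneg (by omega), show -M + (x i j + M) = x i j by ring] at this
  exact this

lemma phi_cmp {e r : ℕ} (M : ℤ) {x y : Fin e → Fin r → ℤ} (h : SameMar x y) (hle : ip x x ≤ ip y y) :
    phi M x ≤ phi M y := by
  have key : ∀ z : Fin e → Fin r → ℤ, phi M z = ip z z - ∑ i, ∑ j, z i j -
      ∑ i : Fin e, ∑ j : Fin r, ((-M) * (-M - 1)) := by
    intro z
    unfold phi ip
    simp only [Finset.sum_sub_distrib, mul_sub, mul_one]
  rw [key, key, Finset.sum_congr rfl fun i _ => h.1 i]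
  linarith

lemma bdd_x {e r : ℕ} (x : Fin e → Fin r → ℤ) : ∃ M0 : ℤ, ∀ M ≥ M0, ∀ i j, -M ≤ x i j := by
  refine ⟨∑ i, ∑ j, |x i j|, fun M hM i j => ?_⟩
  have h1 : ∑ j, |x i j| ≤ ∑ i, ∑ j, |x i j| :=
    Finset.single_le_sum (f := fun i => ∑ j, |x i j|)
      (fun i _ => Finset.sum_nonneg fun j _ => abs_nonneg _) (Finset.mem_univ i)
  have h2 : |x i j| ≤ ∑ j, |x i j| :=
    Finset.single_le_sum (f := fun j => |x i j|) (fun j _ => abs_nonneg _) (Finset.mem_univ j)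
  have := neg_abs_le (x i j)
  omega

lemma SS_periodic {r : ℕ} (e : ℕ) (a : Fin r → ℤ) (M : ℤ) (lam : Multipartition r) (i : ℤ) :
    SS e a M lam (i % e) = SS e a M lam i := by
  unfold SS chi
  simp only [Int.emod_emod_of_dvd _ (dvd_refl (e:ℤ))]

lemma SS_fin {r : ℕ} (e : ℕ) (he : 0 < e) (a : Fin r → ℤ) (M : ℤ) (lam mu : Multipartition r)
    (h : ∀ i : Fin e, SS e a M lam ((i:ℕ):ℤ) = SS e a M mu ((i:ℕ):ℤ)) (i : ℤ) :
    SS e a M lam i = SS e a M mu i := by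
  have hE : (0:ℤ) < e := by exact_mod_cast he
  have h2 := Int.emod_nonneg i hE.ne'
  have h3 := Int.emod_lt_of_pos i hE
  have := h ⟨(i % e).toNat, by omega⟩
  simp only [Int.toNat_of_nonneg h2, SS_periodic] at this
  exact this

lemma cmp {e r : ℕ} (he : 0 < e) (a : Fin r → ℤ) {lam : Multipartition r} {x : Fin e → Fin r → ℤ}
    (hx : MLev e a lam x) (mu : Multipartition r) (hs : SameHub e a lam mu) :
    ∃ y, SameMar x y ∧ (ip x x ≤ ip y y → weight e a lam ≤ weight e a mu) := by
  obtain ⟨M1, -, h1⟩ := exists_good e he a lam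
  obtain ⟨M2, -, h2⟩ := exists_good e he a mu
  obtain ⟨M3, h3⟩ := bdd_x x
  obtain ⟨M, hM⟩ : ∃ M, M ≥ M1 ∧ M ≥ M2 ∧ M ≥ M3 := ⟨max M1 (max M2 M3), by omega⟩
  replace h1 := h1 M hM.1
  replace h2 := h2 M hM.2.1
  replace h3 := h3 M hM.2.2
  have hS := (sameHub_iff e he a M lam mu h1 h2).1 hs
  have hyx := lev_yy h1 hx h3
  have hmar : SameMar x (yy e a M mu) := by
    rw [← hyx]
    exact ⟨fun i => by rw [yy_SS, yy_SS, hS], fun j => by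
      rw [yy_charge e he a M lam h1, yy_charge e he a M mu h2]⟩
  refine ⟨yy e a M mu, hmar, fun hle => ?_⟩
  apply weight_le e he a M lam mu h1 h2 hS
  have e1 := phi_cmp M hmar hle
  have e2 := lev_phi he h1 hx h3
  have e3 := phi_le e he a M mu h2
  omega

lemma cmp_core {e r : ℕ} (he : 0 < e) (a : Fin r → ℤ) {lam mu : Multipartition r}
    {x y : Fin e → Fin r → ℤ} (hx : MLev e a lam x) (hy : MLev e a mu y) (hmar : SameMar x y) :
    SameHub e a lam mu ∧ (ip x x ≤ ip y y → weight e a lam ≤ weight e a mu) := by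
  obtain ⟨M1, -, h1⟩ := exists_good e he a lam
  obtain ⟨M2, -, h2⟩ := exists_good e he a mu
  obtain ⟨M3, h3⟩ := bdd_x x
  obtain ⟨M4, h4⟩ := bdd_x y
  obtain ⟨M, hM⟩ : ∃ M, M ≥ M1 ∧ M ≥ M2 ∧ M ≥ M3 ∧ M ≥ M4 :=
    ⟨max (max M1 M4) (max M2 M3), by omega⟩
  replace h1 := h1 M hM.1
  replace h2 := h2 M hM.2.1
  replace h3 := h3 M hM.2.2.1
  replace h4 := h4 M hM.2.2.2
  have hS : ∀ i, SS e a M lam i = SS e a M mu i := by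
    apply SS_fin e he
    intro i
    have e1 := yy_SS e a M lam i
    have e2 := yy_SS e a M mu i
    rw [lev_yy h1 hx h3] at e1
    rw [lev_yy h2 hy h4] at e2
    have := hmar.1 i
    omega
  refine ⟨(sameHub_iff e he a M lam mu h1 h2).2 hS, fun hle => ?_⟩
  apply weight_le e he a M lam mu h1 h2 hS
  have e1 := phi_cmp M hmar hle
  have e2 := lev_phi he h1 hx h3
  have e3 := lev_phi he h2 hy h4
  omega

lemma mlev_charge {e r : ℕ} (he : 0 < e) (a : Fin r → ℤ) {lam : Multipartition r}
    {x : Fin e → Fin r → ℤ} (hx : MLev e a lam x) (j : Fin r) : ∑ i, x i j = a j := by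
  obtain ⟨M1, -, h1⟩ := exists_good e he a lam
  obtain ⟨M3, h3⟩ := bdd_x x
  obtain ⟨M, hM⟩ : ∃ M, M ≥ M1 ∧ M ≥ M3 := ⟨max M1 M3, by omega⟩
  rw [← yy_charge e he a M lam (h1 M hM.1) j, lev_yy (h1 M hM.1) hx (h3 M hM.2)]

lemma realise {e : ℕ} (he : 0 < e) (aj : ℤ) (L : Fin e → ℤ) (hL : ∑ i, L i = aj) :
    ∃ lam : PartitionFun, SetLev e (betaSet aj lam) L := by
  have hE : (0:ℤ) < e := by exact_mod_cast he
  obtain ⟨M, hM⟩ : ∃ M : ℤ, ∀ i, -M ≤ L i := by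
    obtain ⟨M, h⟩ := bdd_x (fun i (_ : Fin 1) => L i)
    exact ⟨M, fun i => h M le_rfl i 0⟩
  let F : Finset (Σ _ : Fin e, ℤ) := Finset.univ.sigma fun i => Finset.Ico (-M) (L i)
  let f : (Σ _ : Fin e, ℤ) → ℤ := fun p => p.2 * (e:ℤ) + ((p.1:ℕ):ℤ)
  have hf : Function.Injective f := by
    rintro ⟨i, q⟩ ⟨i', q'⟩ h
    obtain ⟨rfl, rfl⟩ := pair_inj h
    rfl
  let S := F.image f
  have hSmem : ∀ (i : Fin e) (q : ℤ), q * (e:ℤ) + ((i:ℕ):ℤ) ∈ S ↔ -M ≤ q ∧ q < L i := by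
    intro i q
    rw [show q * (e:ℤ) + ((i:ℕ):ℤ) = f ⟨i, q⟩ from rfl]
    simp only [S]
    rw [hf.mem_finset_image]
    simp [F]
  obtain ⟨n, hn⟩ : ∃ n, S.card = n := ⟨_, rfl⟩
  have hcard : (n : ℤ) = aj + e * M := by
    rw [← hn, Finset.card_image_of_injective _ hf, Finset.card_sigma]
    push_cast
    have : ∀ i, ((Finset.Ico (-M) (L i)).card : ℤ) = L i + M := by
      intro i; rw [Int.card_Ico]; have := hM i; omega
    simp only [this, Finset.sum_add_distrib, hL]
    simp
  have hlow : ∀ y ∈ S, aj - n ≤ y := by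
    intro y hy
    obtain ⟨i, q, rfl⟩ := exists_pair e he y
    have h1 := ((hSmem i q).1 hy).1
    have : (-M) * e ≤ q * e := mul_le_mul_of_nonneg_right h1 hE.le
    linarith [Int.natCast_nonneg (i:ℕ)]
  let o := S.orderEmbOfFin hn
  have ho : ∀ (k : ℕ) (hk : k < n), aj - n + k ≤ o ⟨k, hk⟩ := by
    intro k
    induction k with
    | zero => intro hk; simpa using hlow _ (S.orderEmbOfFin_mem hn ⟨0, hk⟩)
    | succ k ih =>
      intro hk
      have h1 := ih (by omega)
      have h2 : o ⟨k, by omega⟩ < o ⟨k + 1, hk⟩ := o.strictMono (by simp [Fin.lt_def])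
      push_cast; omega
  let s : ℕ → ℤ := fun b => if h : b < n then o ⟨n - 1 - b, by omega⟩ else aj - (b + 1)
  have hs1 : ∀ b, aj - (b + 1) ≤ s b := by
    intro b
    simp only [s]
    split_ifs with h
    · have := ho (n - 1 - b) (by omega)
      omega
    · rfl
  have hs2 : ∀ b, s (b + 1) < s b := by
    intro b
    by_cases h : b + 1 < n
    · simp only [s, h, show b < n by omega, dif_pos]
      apply o.strictMono
      simp only [Fin.lt_def]; omega
    · have := hs1 b
      have h3 : s (b + 1) = aj - ((b + 1 : ℕ) + 1) := by simp only [s, h, dif_neg, not_false_eq_true]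
      rw [h3]; push_cast; omega
  let lam : PartitionFun := {
    part := fun b => (s b - aj + (b + 1)).toNat
    antitone := by
      apply antitone_nat_of_succ_le
      intro b
      have h1 := hs2 b
      have h2 := hs1 b
      push_cast
      omega
    finite_support := ⟨n, fun b hb => by
      simp only [s, show ¬ b < n by omega, dif_neg, not_false_eq_true]; omega⟩ }
  have hX : ∀ b, X aj lam b = s b := by
    intro b
    have := hs1 b
    simp only [X, lam]
    omega
  refine ⟨lam, fun i q => ?_⟩
  rw [mem_beta]
  simp only [hX]
  have hi : ((i:ℕ):ℤ) < e := by exact_mod_cast i.2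
  constructor
  · rintro ⟨b, hb⟩
    by_cases h : b < n
    · simp only [s, h, dif_pos] at hb
      have := S.orderEmbOfFin_mem hn ⟨n - 1 - b, by omega⟩
      change o _ ∈ S at this
      rw [← hb, hSmem] at this
      exact this.2
    · simp only [s, h, dif_neg, not_false_eq_true] at hb
      by_contra hc
      have h1 := hM i
      have : (-M) * e ≤ q * e := mul_le_mul_of_nonneg_right (by omega) hE.le
      have : (n:ℤ) ≤ b := by exact_mod_cast (not_lt.mp h)
      linarith [Int.natCast_nonneg (i:ℕ)]
  · intro hq
    by_cases hqM : -M ≤ q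
    · have hm := (hSmem i q).2 ⟨hqM, hq⟩
      have hr := Finset.range_orderEmbOfFin S hn
      rw [← Finset.mem_coe, ← hr] at hm
      obtain ⟨⟨k, hk⟩, hk'⟩ := hm
      refine ⟨n - 1 - k, ?_⟩
      rw [← hk']
      simp only [s, show n - 1 - k < n by omega, dif_pos]
      change o _ = o _
      congr 2
      omega
    · have h1 : (q + 1) * e ≤ (-M) * e := mul_le_mul_of_nonneg_right (by omega) hE.le
      have h2 : q * e + ((i:ℕ):ℤ) < aj - n := by linarith
      refine ⟨(aj - 1 - (q * e + ((i:ℕ):ℤ))).toNat, ?_⟩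
      simp only [s]
      rw [dif_neg (by omega)]
      omega

def Step {r : ℕ} (e : ℕ) (a : Fin r → ℤ) (m m' : Multipartition r) : Prop :=
  IsMulticore e a m' ∧ (∃ (i l : ℕ) (j k : Fin r), i < e ∧ l < e ∧ i ≠ l ∧ IsSwap e a i l j k m m') ∧
    weight e a m' ≤ weight e a m

lemma lift_path {e r : ℕ} (he : 0 < e) (a : Fin r → ℤ) {m : Multipartition r}
    {x x' : Fin e → Fin r → ℤ} (hx : MLev e a m x) (h : Relation.ReflTransGen MStep x x') :
    ∃ m', MLev e a m' x' ∧ Relation.ReflTransGen (Step e a) m m' := by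
  induction h with
  | refl => exact ⟨m, hx, .refl⟩
  | tail _ hst ih =>
    obtain ⟨m1, h1, h2⟩ := ih
    have hmar := mstep_mar hst
    rename_i y z _
    have hreal : ∀ j, ∃ lam : PartitionFun, SetLev e (betaSet (a j) lam) (fun i => z i j) := fun j =>
      realise he (a j) _ ((hmar.2 j).trans (mlev_charge he a h1 j))
    choose m2 hm2 using hreal
    have hm2' : MLev e a m2 z := hm2
    refine ⟨m2, hm2', h2.tail ⟨fun j => levels_core he (hm2 j), ?_, ?_⟩⟩
    · obtain ⟨i, l, j, k, hil, hjk, rfl, -⟩ := hst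
      exact ⟨i, l, j, k, i.2, l.2, fun h => hil (Fin.ext h), isSwap_of he a hil hjk h1 hm2'⟩
    · obtain ⟨i, l, j, k, hil, hjk, -, hle⟩ := hst
      exact (cmp_core he a hm2' h1 hmar).2 hle

/-- Lemma 4.1: from any multicore there is a sequence of multicores,
each obtained from the previous by some `s^{jk}_{il}`, with non-increasing weights,
ending in a multicore lying in the core block of `m`. -/
theorem stmt_1 {e r : ℕ} (he : 2 ≤ e) (hr : 0 < r) (a : Fin r → ℤ)
    (m : Multipartition r) (hcore : IsMulticore e a m) :
    ∃ (u : ℕ) (seq : ℕ → Multipartition r),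
      seq 0 = m ∧
      (∀ t ≤ u, IsMulticore e a (seq t)) ∧
      (∀ t < u, ∃ (i l : ℕ) (j k : Fin r), i < e ∧ l < e ∧ i ≠ l ∧
        IsSwap e a i l j k (seq t) (seq (t + 1))) ∧
      (∀ t < u, weight e a (seq (t + 1)) ≤ weight e a (seq t)) ∧
      SameHub e a (seq u) m ∧ MinimalWeight e a (seq u) := by
  have he0 : 0 < e := by omega
  choose L hL using fun j => core_levels he0 (hcore j)
  let x : Fin e → Fin r → ℤ := fun i j => L j i
  have hx : MLev e a m x := hL
  obtain ⟨x', hp, hmar, hmin⟩ := mat_min x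
  obtain ⟨m', hm', hpath⟩ := lift_path he0 a hx hp
  obtain ⟨u, s, h0, hu, hs⟩ := seq_of_rtg hpath
  refine ⟨u, s, h0, ?_, fun t ht => (hs t ht).2.1, fun t ht => (hs t ht).2.2, ?_, ?_⟩
  · intro t ht
    cases t with
    | zero => rw [h0]; exact hcore
    | succ t => exact (hs t (by omega)).1
  · rw [hu]; exact (cmp_core he0 a hm' hx hmar).1
  · rw [hu]
    intro mu hmu
    obtain ⟨y, hy, hw⟩ := cmp he0 a hm' mu hmu
    exact hw (hmin y ⟨fun i => (hmar.1 i).symm.trans (hy.1 i), fun j => (hmar.2 j).symm.trans (hy.2 j)⟩)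

end AK
end
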